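/- Let A be a reduced Noetherian commutative ring and let B be an A-algebra that is flat as an A-module. Suppose that for every minimal prime ideal p of A the fiber ring B ⊗_A κ(p) is reduced, where κ(p) denotes the fraction field of the integral domain A/p. Then B is a reduced ring. -/

import Mathlib

open TensorProduct in
/-- Let `A` be a reduced Noetherian commutative ring and `B` a flat `A`-algebra.
If for every minimal prime `p` of `A` the fiber ring `B ⊗[A] κ(p)` is reduced,
where `κ(p)` is the fraction field of `A ⧸ p`, then `B` is reduced. -/
theorem isReduced_of_flat_of_isReduced_genericFibers
    {A B : Type*} [CommRing A] [IsReduced A] [IsNoetherianRing A]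
    [CommRing B] [Algebra A B] [Module.Flat A B]
    (h : ∀ p ∈ minimalPrimes A, IsReduced (B ⊗[A] FractionRing (A ⧸ p))) :
    IsReduced B := by
  classical
  have hfin : (minimalPrimes A).Finite :=
    Ideal.finite_minimalPrimes_of_isNoetherianRing A ⊥
  have : Fintype (minimalPrimes A) := hfin.fintype
  let K : minimalPrimes A → Type _ := fun p => FractionRing (A ⧸ p.1)
  have hinj : Function.Injective (algebraMap A (∀ p, K p)) := by
    rw [injective_iff_map_eq_zero]
    intro a ha
    have hmem : a ∈ sInf (⊥ : Ideal A).minimalPrimes := by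
      rw [Ideal.mem_sInf]
      intro p hp
      have h1 : algebraMap A (FractionRing (A ⧸ p)) a = 0 := congrFun ha ⟨p, hp⟩
      rw [IsScalarTower.algebraMap_apply A (A ⧸ p) (FractionRing (A ⧸ p))] at h1
      have h2 := IsFractionRing.injective (A ⧸ p) (FractionRing (A ⧸ p))
        (h1.trans (map_zero _).symm)
      exact Ideal.Quotient.eq_zero_iff_mem.mp h2
    rw [Ideal.sInf_minimalPrimes] at hmem
    obtain ⟨n, hn⟩ := hmem
    exact IsReduced.eq_zero a ⟨n, hn⟩
  refine ⟨fun x hx => ?_⟩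
  have hB : Function.Injective
      (Algebra.TensorProduct.includeLeft : B →ₐ[A] B ⊗[A] (∀ p, K p)) :=
    Algebra.TensorProduct.includeLeft_injective hinj
  apply hB
  apply (Algebra.TensorProduct.piRight A A B K).injective
  rw [map_zero, map_zero]
  funext p
  have := h p.1 p.2
  have hn : IsNilpotent ((Algebra.TensorProduct.includeLeft :
      B →ₐ[A] B ⊗[A] FractionRing (A ⧸ p.1)) x) := hx.map _
  simpa [K] using hn.eq_zero
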